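/- Over a field K of characteristic 0, the Darboux–Jouanolou bound holds: if ω is a polynomial 1-form of degree d on Kⁿ with at least C(d−1+n, n)·C(n,2) + 2 distinct invariant irreducible algebraic hypersurfaces, then ω admits a rational first integral. -/

import Mathlib

open MvPolynomial

noncomputable section

/-- The field of rational functions `K(z₁,…,zₙ)`. -/
abbrev FR (K : Type*) [Field K] (n : ℕ) := FractionRing (MvPolynomial (Fin n) K)

variable {K : Type*} [Field K] {n : ℕ}

/-- Inclusion of polynomials into rational functions. -/
def toFR : MvPolynomial (Fin n) K →+* FR K n := algebraMap _ _

/-- The `i`-th partial derivative of a rational function, computed from a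
representation `f = a / s` by the quotient rule. -/
def pd (i : Fin n) (f : FR K n) : FR K n :=
  let s := IsLocalization.sec (nonZeroDivisors (MvPolynomial (Fin n) K)) f
  (toFR (pderiv i s.1) * toFR (s.2 : MvPolynomial (Fin n) K)
      - toFR s.1 * toFR (pderiv i (s.2 : MvPolynomial (Fin n) K)))
    / (toFR (s.2 : MvPolynomial (Fin n) K)) ^ 2

/-- `df = 0`, i.e. `f` is a differential constant (an element of `K(zᵖ)`). -/
def IsDiffConst (f : FR K n) : Prop := ∀ i, pd i f = 0

/-- The logarithmic differential `dF/F` of a polynomial, as a rational 1-form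
(given by its coefficients). -/
def logd (F : MvPolynomial (Fin n) K) : Fin n → FR K n :=
  fun k => toFR (pderiv k F) / toFR F

/-- A rational 1-form (given by coefficients) is closed. -/
def IsClosed1 (η : Fin n → FR K n) : Prop :=
  ∀ k l, pd k (η l) = pd l (η k)

/-- The wedge product of two rational 1-forms, as a rational 2-form given by its
coefficient at `dz_k ∧ dz_l`. -/
def wedge (ω η : Fin n → FR K n) : Fin n → Fin n → FR K n :=
  fun k l => ω k * η l - ω l * η k

/-- An irreducible polynomial `F` is invariant for the polynomial 1-form `ω`
if `F` divides (each coefficient of) `ω ∧ dF`. -/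
def Invariant (ω : Fin n → MvPolynomial (Fin n) K) (F : MvPolynomial (Fin n) K) : Prop :=
  ∀ k l, F ∣ (ω k * pderiv l F - ω l * pderiv k F)

/-- The cofactor `Θ_F = ω ∧ dF / F` of an invariant polynomial, as a rational 2-form. -/
def cofactor (ω : Fin n → MvPolynomial (Fin n) K) (F : MvPolynomial (Fin n) K) :
    Fin n → Fin n → FR K n :=
  fun k l => (toFR (ω k) * toFR (pderiv l F) - toFR (ω l) * toFR (pderiv k F)) / toFR F

/-!
If `F` is invariant, then `ω ∧ dF / F` is a polynomial 2-form of degree at most `d - 1`, so the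
cofactors of the `F i` all lie in a space of dimension `C(d-1+n, n) * C(n, 2)`. Two more
hypersurfaces than this dimension give two independent linear relations among the cofactors, that
is, two closed forms `η = ∑ i, c i • dF i / F i` with `ω ∧ η = 0`. They are linearly independent
because the logarithmic differentials `dF i / F i` are. Both are multiples of `ω`, so their ratio
`f` is a rational function, and closedness of both forms gives `ω ∧ df = 0`. Finally, `f` is not
constant: in characteristic zero a function with `df = 0` is a scalar, which would contradict the
independence of the two forms.
-/

section LinearAlgebra

theorem exists_linearIndependent_relations {K M ι : Type*} [Field K] [AddCommGroup M] [Module K M]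
    [Module.Finite K M] [Fintype ι] {r : ℕ} (h : Module.finrank K M + r ≤ Fintype.card ι)
    (v : ι → M) :
    ∃ c : Fin r → ι → K, LinearIndependent K c ∧ ∀ a, ∑ i, c a i • v i = 0 := by
  let L := Fintype.linearCombination K v
  have hker : r ≤ Module.finrank K (LinearMap.ker L) := by
    have hrank := L.finrank_range_add_finrank_ker
    have hrange := Submodule.finrank_le (LinearMap.range L)
    rw [Module.finrank_fintype_fun_eq_card] at hrank
    omega
  obtain ⟨c, hc⟩ := exists_linearIndependent_of_le_finrank hker
  exact ⟨fun a => c a, hc.map' _ (Submodule.ker_subtype _),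
    fun a => LinearMap.mem_ker.mp (c a).2⟩

end LinearAlgebra

section Cardinality

theorem card_lt_pairs (α : Type*) [Fintype α] [LinearOrder α] :
    Nat.card {p : α × α // p.1 < p.2} = (Fintype.card α).choose 2 := by
  rw [← Sym2.card_subtype_not_diag, ← Nat.card_eq_fintype_card]
  refine Nat.card_congr (Equiv.ofBijective (fun p => ⟨s(p.1.1, p.1.2), p.2.ne⟩) ⟨?_, ?_⟩)
  · rintro ⟨⟨a, b⟩, hab⟩ ⟨⟨c, d⟩, hcd⟩ h
    rcases Sym2.eq_iff.mp (Subtype.ext_iff.mp h) with ⟨rfl, rfl⟩ | ⟨rfl, rfl⟩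
    · rfl
    · exact absurd hab hcd.asymm
  · rintro ⟨s, hs⟩
    induction s with | _ a b
    rcases lt_or_gt_of_ne hs with hab | hab
    · exact ⟨⟨(a, b), hab⟩, rfl⟩
    · exact ⟨⟨(b, a), hab⟩, Subtype.ext Sym2.eq_swap⟩

theorem sum_option_eq {σ : Type*} (P : Option σ →₀ ℕ) :
    P.sum (fun _ => id) = P none + P.some.sum fun _ e => e :=
  Finsupp.sum_option_index P (fun _ => id) (fun _ => rfl) fun _ _ _ => rfl

/-- Monomials of degree at most `D` in the variables `σ` correspond to exponents of total degree
exactly `D` in `Option σ`: the exponent of `none` is the slack in the inequality. -/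
def slackEquiv (σ : Type*) (D : ℕ) :
    {P : Option σ →₀ ℕ // P.sum (fun _ => id) = D} ≃
      {s : σ →₀ ℕ | (s.sum fun _ e => e) ≤ D} where
  toFun P := ⟨P.1.some, (Nat.le_add_left _ _).trans ((sum_option_eq P.1).symm.trans P.2).le⟩
  invFun s := ⟨s.1.optionElim (D - s.1.sum fun _ e => e), by
    rw [sum_option_eq, Finsupp.some_optionElim, Finsupp.optionElim_apply_none]
    exact Nat.sub_add_cancel s.2⟩
  left_inv := by
    rintro ⟨P, rfl⟩
    simp [sum_option_eq]
  right_inv s := Subtype.ext (Finsupp.some_optionElim _ _)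

theorem card_finsupp_sum_le (σ : Type*) [Fintype σ] (D : ℕ) :
    Nat.card {s : σ →₀ ℕ | (s.sum fun _ e => e) ≤ D} =
      (D + Fintype.card σ).choose (Fintype.card σ) := by
  classical
  rw [← Nat.card_congr ((Sym.equivNatSum (Option σ) D).trans (slackEquiv σ D)),
    Nat.card_eq_fintype_card, Sym.card_sym_eq_choose, Fintype.card_option, ← Nat.choose_symm_add]
  congr 1
  omega

theorem finrank_restrictTotalDegree (R σ : Type*) [CommRing R] [Nontrivial R] [Fintype σ] (D : ℕ) :
    Module.finrank R (restrictTotalDegree σ R D) =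
      (D + Fintype.card σ).choose (Fintype.card σ) := by
  rw [← card_finsupp_sum_le]
  exact Module.finrank_eq_nat_card_basis (basisRestrictSupport R _)

end Cardinality

section PartialDerivatives

variable {R σ : Type*}

theorem pderiv_comm [CommRing R] (k l : σ) (F : MvPolynomial σ R) :
    pderiv k (pderiv l F) = pderiv l (pderiv k F) := by
  classical
  have h : ⁅(pderiv k : Derivation R (MvPolynomial σ R) (MvPolynomial σ R)), pderiv l⁆ = 0 :=
    derivation_ext fun j => by
      rw [Derivation.commutator_apply]
      simp [pderiv_X, Pi.single_apply, apply_ite]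
  exact sub_eq_zero.mp (Derivation.congr_fun h F)

theorem totalDegree_pderiv_le [CommSemiring R] (i : σ) (F : MvPolynomial σ R) :
    (pderiv i F).totalDegree ≤ F.totalDegree - 1 := by
  refine Finset.sup_le fun s hs => ?_
  rw [mem_support_iff, coeff_pderiv] at hs
  have h := le_totalDegree (mem_support_iff.mpr (left_ne_zero_of_mul hs))
  rw [Finsupp.sum_add_index' (fun _ => rfl) (fun _ _ _ => rfl), Finsupp.sum_single_index rfl] at h
  exact Nat.le_sub_one_of_lt h

theorem pderiv_eq_zero_of_dvd [CommRing R] [IsDomain R] {i : σ} {F : MvPolynomial σ R}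
    (h : F ∣ pderiv i F) : pderiv i F = 0 := by
  by_contra hne
  have hdeg := (totalDegree_le_of_dvd_of_isDomain h hne).trans (totalDegree_pderiv_le i F)
  have hconst : F.totalDegree = 0 := by omega
  rw [totalDegree_eq_zero_iff_eq_C.mp hconst, pderiv_C] at hne
  exact hne rfl

theorem eq_C_of_pderiv_eq_zero [CommSemiring R] [NoZeroDivisors R] [CharZero R]
    {F : MvPolynomial σ R} (h : ∀ i, pderiv i F = 0) : F = C (coeff 0 F) := by
  classical
  ext s
  rw [coeff_C]
  split_ifs with hs
  · rw [hs]
  · obtain ⟨i, hi⟩ := Finsupp.ne_iff.mp (Ne.symm hs)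
    have hcoeff := congrArg (coeff (s - Finsupp.single i 1)) (h i)
    rw [coeff_pderiv, Finsupp.sub_add_single_one_cancel hi, coeff_zero] at hcoeff
    exact (mul_eq_zero.mp hcoeff).resolve_right (Nat.cast_add_one_ne_zero _)

theorem totalDegree_pos_of_irreducible {K : Type*} [Field K] {F : MvPolynomial σ K}
    (hF : Irreducible F) : 0 < F.totalDegree := by
  refine Nat.pos_of_ne_zero fun h => hF.not_isUnit ?_
  have hC := totalDegree_eq_zero_iff_eq_C.mp h
  refine isUnit_iff_eq_C_of_isReduced.mpr ⟨coeff 0 F, isUnit_iff_ne_zero.mpr fun h0 => ?_, hC⟩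
  exact hF.ne_zero (by rw [hC, h0, C_0])

theorem exists_not_dvd_pderiv {K : Type*} [Field K] [CharZero K] {F : MvPolynomial σ K}
    (hF : Irreducible F) : ∃ i, ¬ F ∣ pderiv i F := by
  by_contra! h
  have hC := eq_C_of_pderiv_eq_zero fun i => pderiv_eq_zero_of_dvd (h i)
  refine (totalDegree_pos_of_irreducible hF).ne' ?_
  rw [hC, totalDegree_C]

end PartialDerivatives

section TwoForms

variable (σ R : Type*)

/-- The module of polynomial 2-forms of degree at most `D`. A 2-form is encoded by the full
alternating array of its coefficients at `dz_k ∧ dz_l`. -/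
def polyTwoForms [CommRing R] (D : ℕ) : Submodule R (σ → σ → MvPolynomial σ R) where
  carrier := {Θ | (∀ k, Θ k k = 0) ∧ (∀ k l, Θ k l = -Θ l k) ∧
    ∀ k l, Θ k l ∈ restrictTotalDegree σ R D}
  zero_mem' := ⟨fun _ => rfl, fun _ _ => neg_zero.symm, fun _ _ => zero_mem _⟩
  add_mem' := fun {Θ Ψ} hΘ hΨ =>
    ⟨fun k => by simp [hΘ.1 k, hΨ.1 k],
      fun k l => by simp only [Pi.add_apply, neg_add, ← hΘ.2.1 k l, ← hΨ.2.1 k l],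
      fun k l => add_mem (hΘ.2.2 k l) (hΨ.2.2 k l)⟩
  smul_mem' := fun c Θ hΘ =>
    ⟨fun k => by simp [hΘ.1 k],
      fun k l => by simp only [Pi.smul_apply, ← smul_neg, ← hΘ.2.1 k l],
      fun k l => Submodule.smul_mem _ c (hΘ.2.2 k l)⟩

/-- The coefficients of a polynomial 2-form at the `dz_k ∧ dz_l` with `k < l`. -/
def ltCoeffs [CommRing R] [LT σ] (D : ℕ) :
    polyTwoForms σ R D →ₗ[R] ({p : σ × σ // p.1 < p.2} → restrictTotalDegree σ R D) where
  toFun Θ p := ⟨Θ.1 p.1.1 p.1.2, Θ.2.2.2 _ _⟩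
  map_add' _ _ := rfl
  map_smul' _ _ := rfl

theorem ltCoeffs_injective [CommRing R] [LinearOrder σ] (D : ℕ) :
    Function.Injective (ltCoeffs σ R D) := by
  refine (injective_iff_map_eq_zero _).mpr fun Θ h => Subtype.ext (funext₂ fun k l => ?_)
  have hlt {k l : σ} (hkl : k < l) : Θ.1 k l = 0 :=
    congrArg Subtype.val (congrFun h ⟨(k, l), hkl⟩)
  rcases lt_trichotomy k l with hkl | rfl | hkl
  · exact hlt hkl
  · exact Θ.2.1 k
  · exact (Θ.2.2.1 k l).trans (neg_eq_zero.mpr (hlt hkl))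

variable [LinearOrder σ] (D : ℕ)

instance finite_polyTwoForms [CommRing R] [IsNoetherianRing R] [Finite σ] :
    Module.Finite R (polyTwoForms σ R D) :=
  Module.Finite.of_injective (ltCoeffs σ R D) (ltCoeffs_injective σ R D)

theorem finrank_polyTwoForms_le [CommRing R] [Nontrivial R] [Fintype σ] :
    Module.finrank R (polyTwoForms σ R D) ≤
      (D + Fintype.card σ).choose (Fintype.card σ) * (Fintype.card σ).choose 2 := by
  have : Module.Free R (restrictTotalDegree σ R D) :=
    Module.Free.of_basis (basisRestrictSupport R _)
  have h := LinearMap.finrank_le_finrank_of_injective (ltCoeffs_injective σ R D)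
  rwa [Module.finrank_pi_fintype, Finset.sum_const, Finset.card_univ, smul_eq_mul,
    finrank_restrictTotalDegree, ← Nat.card_eq_fintype_card, card_lt_pairs, mul_comm] at h

end TwoForms

section PartialFractions

theorem dvd_of_sum_mul_prod_erase_eq_zero {A ι : Type*} [CommRing A] [DecidableEq ι]
    {s : Finset ι} {F a : ι → A} {j : ι} (hj : j ∈ s) (hprime : Prime (F j))
    (hndvd : ∀ i ∈ s, i ≠ j → ¬ F j ∣ F i)
    (h : ∑ i ∈ s, a i * ∏ l ∈ s.erase i, F l = 0) : F j ∣ a j := by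
  have hdvd : F j ∣ a j * ∏ l ∈ s.erase j, F l := by
    rw [← Finset.add_sum_erase _ _ hj, add_eq_zero_iff_eq_neg] at h
    rw [h, dvd_neg]
    refine Finset.dvd_sum fun i hi => (Finset.dvd_prod_of_mem F ?_).mul_left _
    exact Finset.mem_erase.mpr ⟨(Finset.ne_of_mem_erase hi).symm, hj⟩
  refine (hprime.dvd_or_dvd hdvd).resolve_right fun hprod => ?_
  obtain ⟨i, hi, hdvd⟩ := (hprime.dvd_finsetProd_iff F).mp hprod
  exact hndvd i (Finset.mem_of_mem_erase hi) (Finset.ne_of_mem_erase hi) hdvd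

theorem dvd_of_sum_div_eq_zero {A L ι : Type*} [CommRing A] [Field L] [Algebra A L]
    [FaithfulSMul A L] {s : Finset ι} {F a : ι → A} (hF : ∀ i ∈ s, F i ≠ 0) {j : ι} (hj : j ∈ s)
    (hprime : Prime (F j)) (hndvd : ∀ i ∈ s, i ≠ j → ¬ F j ∣ F i)
    (h : ∑ i ∈ s, algebraMap A L (a i) / algebraMap A L (F i) = 0) : F j ∣ a j := by
  classical
  refine dvd_of_sum_mul_prod_erase_eq_zero hj hprime hndvd
    (FaithfulSMul.algebraMap_injective A L ?_)
  rw [map_sum, map_zero, ← mul_zero (algebraMap A L (∏ l ∈ s, F l)), ← h, Finset.mul_sum]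
  refine Finset.sum_congr rfl fun i hi => ?_
  have hi0 : algebraMap A L (F i) ≠ 0 := by
    simpa only [ne_eq, FaithfulSMul.algebraMap_eq_zero_iff] using hF i hi
  rw [← Finset.mul_prod_erase s F hi, map_mul, map_mul]
  field_simp

end PartialFractions

section RationalFunctions

theorem quotientRule_congr {R A L : Type*} [CommRing R] [CommRing A] [Algebra R A] [Field L]
    [Algebra A L] (D : Derivation R A A) {a b p q : A} (hb : algebraMap A L b ≠ 0)
    (hq : algebraMap A L q ≠ 0) (h : a * q = p * b) :
    (algebraMap A L (D a) * algebraMap A L b - algebraMap A L a * algebraMap A L (D b)) /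
        algebraMap A L b ^ 2 =
      (algebraMap A L (D p) * algebraMap A L q - algebraMap A L p * algebraMap A L (D q)) /
        algebraMap A L q ^ 2 := by
  have hD := congrArg (fun x => algebraMap A L (D x)) h
  simp only [Derivation.leibniz, smul_eq_mul, map_add, map_mul] at hD
  have hL := congrArg (algebraMap A L) h
  rw [map_mul, map_mul] at hL
  rw [div_eq_div_iff (pow_ne_zero 2 hb) (pow_ne_zero 2 hq)]
  linear_combination algebraMap A L b * algebraMap A L q * hD -
    (algebraMap A L (D b) * algebraMap A L q + algebraMap A L (D q) * algebraMap A L b) * hL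

theorem toFR_injective : Function.Injective (toFR : MvPolynomial (Fin n) K →+* FR K n) :=
  IsFractionRing.injective _ _

theorem toFR_ne_zero {a : MvPolynomial (Fin n) K} (ha : a ≠ 0) : toFR a ≠ 0 :=
  (map_ne_zero_iff _ toFR_injective).mpr ha

theorem toFR_C (c : K) : (toFR (C c) : FR K n) = algebraMap K (FR K n) c :=
  (IsScalarTower.algebraMap_apply K (MvPolynomial (Fin n) K) (FR K n) c).symm

theorem toFR_smul (c : K) (a : MvPolynomial (Fin n) K) : toFR (c • a) = c • toFR a := by
  rw [smul_eq_C_mul, map_mul, toFR_C, Algebra.smul_def]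

theorem exists_eq_toFR_div (f : FR K n) :
    ∃ a b : MvPolynomial (Fin n) K, b ≠ 0 ∧ f = toFR a / toFR b := by
  obtain ⟨a, b, hb, h⟩ := IsFractionRing.div_surjective (A := MvPolynomial (Fin n) K) f
  exact ⟨a, b, nonZeroDivisors.ne_zero hb, h.symm⟩

theorem pd_div (i : Fin n) (a : MvPolynomial (Fin n) K) {b : MvPolynomial (Fin n) K}
    (hb : b ≠ 0) :
    pd i (toFR a / toFR b) =
      (toFR (pderiv i a) * toFR b - toFR a * toFR (pderiv i b)) / toFR b ^ 2 := by
  have hb' := toFR_ne_zero hb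
  unfold pd
  set s := IsLocalization.sec (nonZeroDivisors (MvPolynomial (Fin n) K)) (toFR a / toFR b)
  have hspec : toFR a / toFR b * toFR (s.2 : MvPolynomial (Fin n) K) = toFR s.1 :=
    IsLocalization.sec_spec _ _
  refine quotientRule_congr (pderiv i) (toFR_ne_zero (nonZeroDivisors.ne_zero s.2.2)) hb' ?_
  apply toFR_injective
  rw [map_mul, map_mul, ← hspec]
  field_simp

theorem pd_toFR (i : Fin n) (a : MvPolynomial (Fin n) K) : pd i (toFR a) = toFR (pderiv i a) := by
  simpa using pd_div i a one_ne_zero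

theorem pd_add (i : Fin n) (f g : FR K n) : pd i (f + g) = pd i f + pd i g := by
  obtain ⟨a, b, hb, rfl⟩ := exists_eq_toFR_div f
  obtain ⟨p, q, hq, rfl⟩ := exists_eq_toFR_div g
  have hb' := toFR_ne_zero hb
  have hq' := toFR_ne_zero hq
  have hsum : toFR a / toFR b + toFR p / toFR q = toFR (a * q + b * p) / toFR (b * q) := by
    rw [div_add_div _ _ hb' hq', map_add, map_mul, map_mul, map_mul]
  rw [hsum, pd_div i _ (mul_ne_zero hb hq), pd_div i a hb, pd_div i p hq]
  simp only [map_mul, map_add, pderiv_mul]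
  field_simp
  ring

theorem pd_mul (i : Fin n) (f g : FR K n) : pd i (f * g) = f * pd i g + g * pd i f := by
  obtain ⟨a, b, hb, rfl⟩ := exists_eq_toFR_div f
  obtain ⟨p, q, hq, rfl⟩ := exists_eq_toFR_div g
  have hb' := toFR_ne_zero hb
  have hq' := toFR_ne_zero hq
  have hprod : toFR a / toFR b * (toFR p / toFR q) = toFR (a * p) / toFR (b * q) := by
    rw [div_mul_div_comm, map_mul, map_mul]
  rw [hprod, pd_div i _ (mul_ne_zero hb hq), pd_div i a hb, pd_div i p hq]
  simp only [map_mul, map_add, pderiv_mul]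
  field_simp
  ring

theorem pd_smul (i : Fin n) (c : K) (f : FR K n) : pd i (c • f) = c • pd i f := by
  rw [Algebra.smul_def, pd_mul, ← toFR_C, pd_toFR, pderiv_C, map_zero, mul_zero, add_zero, toFR_C,
    Algebra.smul_def]

/-- The partial derivative `pd i`, bundled as a derivation of the field of rational functions. -/
def pdDerivation (i : Fin n) : Derivation K (FR K n) (FR K n) :=
  Derivation.mk' { toFun := pd i, map_add' := pd_add i, map_smul' := pd_smul i } (pd_mul i)

theorem pd_sum_smul {ι : Type*} (s : Finset ι) (i : Fin n) (c : ι → K) (f : ι → FR K n) :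
    pd i (∑ j ∈ s, c j • f j) = ∑ j ∈ s, c j • pd i (f j) :=
  (map_sum (pdDerivation i) _ s).trans
    (Finset.sum_congr rfl fun j _ => (pdDerivation i).map_smul (c j) (f j))

theorem pderiv_eq_zero_of_isRelPrime {a b : MvPolynomial (Fin n) K} (hb : b ≠ 0)
    (hab : IsRelPrime a b) {i : Fin n} (h : pd i (toFR a / toFR b) = 0) :
    pderiv i a = 0 ∧ pderiv i b = 0 := by
  rw [pd_div i a hb, div_eq_zero_iff, or_iff_left (pow_ne_zero 2 (toFR_ne_zero hb)), sub_eq_zero,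
    ← map_mul, ← map_mul] at h
  have hcross := toFR_injective h
  have hdvd : b ∣ a * pderiv i b := hcross ▸ dvd_mul_left b (pderiv i a)
  have hb' := pderiv_eq_zero_of_dvd (hab.symm.dvd_of_dvd_mul_left hdvd)
  rw [hb', mul_zero] at hcross
  exact ⟨(mul_eq_zero.mp hcross).resolve_right hb, hb'⟩

theorem IsDiffConst.exists_eq_algebraMap [CharZero K] {f : FR K n} (hf : IsDiffConst f) :
    ∃ c : K, f = algebraMap K (FR K n) c := by
  obtain ⟨a, b, hab, rfl⟩ := IsFractionRing.exists_reduced_fraction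
    (A := MvPolynomial (Fin n) K) f
  have hb : (b : MvPolynomial (Fin n) K) ≠ 0 := nonZeroDivisors.ne_zero b.2
  have hfrac : IsLocalization.mk' (FR K n) a b = toFR a / toFR (b : MvPolynomial (Fin n) K) :=
    IsFractionRing.mk'_eq_div _
  rw [hfrac] at hf ⊢
  have hd := fun i => pderiv_eq_zero_of_isRelPrime hb hab (hf i)
  refine ⟨coeff 0 a / coeff 0 (b : MvPolynomial (Fin n) K), ?_⟩
  rw [eq_C_of_pderiv_eq_zero fun i => (hd i).1, eq_C_of_pderiv_eq_zero fun i => (hd i).2, toFR_C,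
    toFR_C, ← map_div₀, coeff_C, coeff_C, if_pos rfl, if_pos rfl]

end RationalFunctions

section OneForms

theorem isClosed1_logd {F : MvPolynomial (Fin n) K} (hF : F ≠ 0) : IsClosed1 (logd F) := by
  intro k l
  rw [logd, logd, pd_div _ _ hF, pd_div _ _ hF, pderiv_comm k l, mul_comm (toFR (pderiv l F))]

theorem IsClosed1.sum_smul {ι : Type*} {s : Finset ι} {η : ι → Fin n → FR K n}
    (h : ∀ i ∈ s, IsClosed1 (η i)) (c : ι → K) : IsClosed1 (∑ i ∈ s, c i • η i) := by
  intro k l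
  simp only [Finset.sum_apply, Pi.smul_apply, pd_sum_smul]
  exact Finset.sum_congr rfl fun i hi => congrArg (c i • ·) (h i hi k l)

-- The coefficient `c j` is the residue of `∑ i, c i • logd (F i)` along `F j = 0`: after clearing
-- denominators, vanishing of the form makes `F j` divide `c j • dF j`, but `F j` does not divide
-- `dF j`.
theorem linearIndependent_logd [CharZero K] {ι : Type*} {F : ι → MvPolynomial (Fin n) K}
    (hirr : ∀ i, Irreducible (F i)) (hdist : ∀ i j, i ≠ j → ¬ Associated (F i) (F j)) :
    LinearIndependent K fun i => logd (F i) := by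
  refine linearIndependent_iff'.mpr fun s c hsum j hj => ?_
  obtain ⟨k, hk⟩ := exists_not_dvd_pderiv (hirr j)
  have hdvd : F j ∣ c j • pderiv k (F j) := by
    refine dvd_of_sum_div_eq_zero (L := FR K n) (a := fun i => c i • pderiv k (F i))
      (fun i _ => (hirr i).ne_zero) hj (hirr j).prime
      (fun i _ hij h => hdist j i hij.symm ((hirr j).associated_of_dvd (hirr i) h)) ?_
    have hk := congrFun hsum k
    simp only [Finset.sum_apply, Pi.smul_apply, logd, Pi.zero_apply] at hk
    rw [← hk]
    exact Finset.sum_congr rfl fun i _ =>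
      (congrArg (· / toFR (F i)) (toFR_smul _ _)).trans (smul_div_assoc _ _ _)
  by_contra hc
  exact hk ((hdvd.mul_left (C (c j)⁻¹)).trans (by simp [smul_eq_C_mul, ← mul_assoc, ← C_mul, hc]))

theorem wedge_smul_left (g : FR K n) (ω η : Fin n → FR K n) :
    wedge (g • ω) η = g • wedge ω η := by
  ext k l
  simp only [wedge, Pi.smul_apply, smul_eq_mul]
  ring

theorem wedge_sum_smul {ι : Type*} (s : Finset ι) (ω : Fin n → FR K n) (c : ι → K)
    (η : ι → Fin n → FR K n) :
    wedge ω (∑ i ∈ s, c i • η i) = ∑ i ∈ s, c i • wedge ω (η i) := by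
  ext k l
  simp only [wedge, Finset.sum_apply, Pi.smul_apply, Finset.mul_sum, mul_smul_comm, smul_sub,
    Finset.sum_sub_distrib]

theorem exists_eq_smul_of_wedge_eq_zero {ω η : Fin n → FR K n} (hω : ω ≠ 0)
    (h : wedge ω η = 0) : ∃ g : FR K n, η = g • ω := by
  obtain ⟨a, ha⟩ := Function.ne_iff.mp hω
  refine ⟨η a / ω a, funext fun k => ?_⟩
  have hak : ω a * η k - ω k * η a = 0 := congrFun₂ h a k
  rw [Pi.smul_apply, smul_eq_mul, div_mul_eq_mul_div, eq_div_iff ha]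
  linear_combination hak

theorem wedge_pd_eq_zero_of_isClosed1_smul {η : Fin n → FR K n} {f : FR K n}
    (hη : IsClosed1 η) (hfη : IsClosed1 (f • η)) : wedge η (fun k => pd k f) = 0 := by
  ext k l
  have hkl := hfη k l
  simp only [Pi.smul_apply, smul_eq_mul, pd_mul, hη k l] at hkl
  simp only [wedge, Pi.zero_apply]
  linear_combination -hkl

theorem exists_firstIntegral_of_linearIndependent [CharZero K] {ω : Fin n → FR K n}
    {η : Fin 2 → Fin n → FR K n} (hω : ω ≠ 0) (hη : LinearIndependent K η)
    (hclosed : ∀ a, IsClosed1 (η a)) (hwedge : ∀ a, wedge ω (η a) = 0) :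
    ∃ f : FR K n, ¬ IsDiffConst f ∧ wedge ω (fun k => pd k f) = 0 := by
  obtain ⟨g₀, hg₀⟩ := exists_eq_smul_of_wedge_eq_zero hω (hwedge 0)
  obtain ⟨g₁, hg₁⟩ := exists_eq_smul_of_wedge_eq_zero hω (hwedge 1)
  have hne : g₁ ≠ 0 := by
    rintro rfl
    exact hη.ne_zero 1 (by rw [hg₁, zero_smul])
  have hratio : η 0 = (g₀ / g₁) • η 1 := by rw [hg₁, smul_smul, div_mul_cancel₀ _ hne, ← hg₀]
  refine ⟨g₀ / g₁, fun hconst => ?_, ?_⟩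
  · obtain ⟨c, hc⟩ := hconst.exists_eq_algebraMap
    refine (linearIndependent_fin2.mp hη).2 c ?_
    rw [hratio, hc, algebraMap_smul]
  · have h := wedge_pd_eq_zero_of_isClosed1_smul (hclosed 1) (hratio ▸ hclosed 0)
    rw [hg₁, wedge_smul_left] at h
    exact (smul_eq_zero.mp h).resolve_left hne

end OneForms

section Cofactors

variable {ω : Fin n → MvPolynomial (Fin n) K}

theorem wedge_logd (ω : Fin n → MvPolynomial (Fin n) K) (F : MvPolynomial (Fin n) K) :
    wedge (fun k => toFR (ω k)) (logd F) = cofactor ω F := by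
  ext k l
  simp only [wedge, logd, cofactor, ← mul_div_assoc, ← sub_div]

-- For `d = 0` the truncated bound `d - 1 = 0` is still correct: the degrees then force `Q = 0`.
theorem totalDegree_cofactor_le {d : ℕ} (hdeg : ∀ i, (ω i).totalDegree ≤ d)
    {F Q : MvPolynomial (Fin n) K} (hF : Irreducible F) {k l : Fin n}
    (hQ : ω k * pderiv l F - ω l * pderiv k F = F * Q) : Q.totalDegree ≤ d - 1 := by
  rcases eq_or_ne Q 0 with rfl | hQ0
  · simp
  have hpos := totalDegree_pos_of_irreducible hF
  have hmul (i j : Fin n) : (ω i * pderiv j F).totalDegree ≤ d + (F.totalDegree - 1) :=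
    (totalDegree_mul _ _).trans (add_le_add (hdeg i) (totalDegree_pderiv_le j F))
  have hsub := (totalDegree_sub _ _).trans (max_le (hmul k l) (hmul l k))
  rw [hQ, totalDegree_mul_of_isDomain hF.ne_zero hQ0] at hsub
  omega

theorem exists_polyTwoForms_eq_cofactor {d : ℕ} (hdeg : ∀ i, (ω i).totalDegree ≤ d)
    {F : MvPolynomial (Fin n) K} (hF : Irreducible F) (hinv : Invariant ω F) :
    ∃ Θ ∈ polyTwoForms (Fin n) K (d - 1), ∀ k l, toFR (Θ k l) = cofactor ω F k l := by
  choose Θ hΘ using hinv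
  have hcancel {P Q : MvPolynomial (Fin n) K} (h : F * P = F * Q) : P = Q :=
    mul_left_cancel₀ hF.ne_zero h
  refine ⟨Θ, ⟨fun k => hcancel ?_, fun k l => hcancel ?_, fun k l => ?_⟩, fun k l => ?_⟩
  · rw [← hΘ, sub_self, mul_zero]
  · rw [mul_neg, ← hΘ, ← hΘ, neg_sub]
  · exact (mem_restrictTotalDegree _ _ _).mpr (totalDegree_cofactor_le hdeg hF (hΘ k l))
  · rw [cofactor, eq_div_iff (toFR_ne_zero hF.ne_zero), ← map_mul, ← map_mul, ← map_mul,
      ← map_sub, hΘ, mul_comm]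

theorem exists_linearIndependent_cofactor_relations {d r : ℕ} {ι : Type*} [Fintype ι]
    (hdeg : ∀ i, (ω i).totalDegree ≤ d) {F : ι → MvPolynomial (Fin n) K}
    (hirr : ∀ i, Irreducible (F i)) (hinv : ∀ i, Invariant ω (F i))
    (hcard : (d - 1 + n).choose n * n.choose 2 + r ≤ Fintype.card ι) :
    ∃ c : Fin r → ι → K, LinearIndependent K c ∧ ∀ a, ∑ i, c a i • cofactor ω (F i) = 0 := by
  choose Θ hmem hΘ using fun i => exists_polyTwoForms_eq_cofactor hdeg (hirr i) (hinv i)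
  have hrank := finrank_polyTwoForms_le (Fin n) K (d - 1)
  rw [Fintype.card_fin] at hrank
  obtain ⟨c, hc, hrel⟩ := exists_linearIndependent_relations
    ((Nat.add_le_add_right hrank r).trans hcard)
    fun i => (⟨Θ i, hmem i⟩ : polyTwoForms (Fin n) K (d - 1))
  refine ⟨c, hc, fun a => funext₂ fun k l => ?_⟩
  have hkl : ∑ i, c a i • Θ i k l = 0 := by
    simpa using congrFun₂ (congrArg Subtype.val (hrel a)) k l
  simpa [toFR_smul, hΘ] using congrArg toFR hkl

theorem exists_firstIntegral_of_cofactor_relations [CharZero K] {ι : Type*} [Fintype ι]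
    (hω : ω ≠ 0) {F : ι → MvPolynomial (Fin n) K} (hirr : ∀ i, Irreducible (F i))
    (hdist : ∀ i j, i ≠ j → ¬ Associated (F i) (F j)) {c : Fin 2 → ι → K}
    (hc : LinearIndependent K c) (hrel : ∀ a, ∑ i, c a i • cofactor ω (F i) = 0) :
    ∃ f : FR K n, ¬ IsDiffConst f ∧ wedge (fun k => toFR (ω k)) (fun k => pd k f) = 0 := by
  have hω' : (fun k => toFR (ω k)) ≠ 0 := fun h =>
    hω (funext fun k => toFR_injective ((congrFun h k).trans (map_zero toFR).symm))
  refine exists_firstIntegral_of_linearIndependent (η := fun a => ∑ i, c a i • logd (F i)) hω'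
    (hc.map' (Fintype.linearCombination K fun i => logd (F i)) ?_)
    (fun a => IsClosed1.sum_smul (fun i _ => isClosed1_logd (hirr i).ne_zero) (c a)) fun a => ?_
  · exact LinearMap.ker_eq_bot.mpr
      (linearIndependent_logd hirr hdist).fintypeLinearCombination_injective
  · simp only [wedge_sum_smul, wedge_logd, hrel a]

theorem not_isDiffConst_toFR_of_irreducible [CharZero K] {F : MvPolynomial (Fin n) K}
    (hF : Irreducible F) : ¬ IsDiffConst (toFR F) := by
  intro h
  obtain ⟨k, hk⟩ := exists_not_dvd_pderiv hF
  have hkF := h k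
  rw [pd_toFR, map_eq_zero_iff _ toFR_injective] at hkF
  exact hk (hkF ▸ dvd_zero F)

end Cofactors

/-- (Darboux–Jouanolou, characteristic `0`.) A polynomial 1-form of
degree `d` on `Kⁿ`, over a field of characteristic `0`, with at least
`C(d-1+n,n)·C(n,2) + 2` pairwise non-associate invariant irreducible polynomials,
admits a rational first integral. -/
theorem stmt18 {K : Type*} [Field K] [CharZero K] {n d m : ℕ}
    (hm : m = Nat.choose (d - 1 + n) n * Nat.choose n 2 + 2)
    (ω : Fin n → MvPolynomial (Fin n) K)
    (hdeg : ∀ i, (ω i).totalDegree ≤ d)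
    (F : Fin m → MvPolynomial (Fin n) K)
    (hirr : ∀ i, Irreducible (F i))
    (hdist : ∀ i j, i ≠ j → ¬ Associated (F i) (F j))
    (hinv : ∀ i, Invariant ω (F i)) :
    ∃ f : FR K n, (∃ k, pd k f ≠ 0) ∧
      ∀ k l, wedge (fun k => toFR (ω k)) (fun k => pd k f) k l = 0 := by
  suffices ∃ f : FR K n, ¬ IsDiffConst f ∧
      wedge (fun k => toFR (ω k)) (fun k => pd k f) = 0 by
    obtain ⟨f, hf, hwedge⟩ := this
    exact ⟨f, not_forall.mp hf, fun k l => congrFun₂ hwedge k l⟩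
  rcases eq_or_ne ω 0 with rfl | hω
  · refine ⟨toFR (F ⟨0, by omega⟩), not_isDiffConst_toFR_of_irreducible (hirr _), ?_⟩
    ext k l
    simp [wedge]
  · obtain ⟨c, hc, hrel⟩ := exists_linearIndependent_cofactor_relations (r := 2) hdeg hirr hinv
      (by rw [Fintype.card_fin, hm])
    exact exists_firstIntegral_of_cofactor_relations hω hirr hdist hc hrel
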